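/- arXiv:math/0012105 — 3 statements merged into one kernel-verified Lean document; each statement's English description precedes it below -/
import Mathlib

section
/- Let A be a unital C*-algebra and P : A → A a linear map. Then P is a complete left M-projection (i.e., P∘P = P and for every n ≥ 1 and every n×n matrix x over A one has ‖(Pₙx)*(Pₙx) + (x − Pₙx)*(x − Pₙx)‖ = ‖x‖² in Mₙ(A), where Pₙ is the entrywise application of P) if and only if there exists a self-adjoint idempotent e ∈ A (e = e* = e²) such that P(x) = e·x for all x ∈ A; in that case necessarily e = P(1). -/
/-!
The linear maps on a C⋆-algebra `B` with `‖(Tx)⋆(Tx) + (x - Tx)⋆(x - Tx)‖ = ‖x‖²` are contractive,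
so an idempotent `T 1` is a projection. If moreover `T` commutes with left multiplication by a
projection `p`, then replacing the `p`-part of `x` by that of `T x` cannot increase the norm:
`y = p (T x) + (1 - p) x` satisfies `T y = T x`, while `y - T x` is dominated by `x - T x`.

For a unitary `u` of `A`, apply this to the matrix `x = [1, u; -u⋆, 1]`, which is `√2` times a
unitary, with `p` the projection onto the first row. Then `y = [P 1, P u; -u⋆, 1]` satisfies
`y⋆y ≤ 2`. On the column `v = (-u, 1)` the second row of `y` already attains this bound, so the
first row must vanish there: `P u = P 1 * u`. Unitaries span `A`.
-/

section CStar

attribute [local instance] CStarAlgebra.spectralOrder CStarAlgebra.spectralOrderedRing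

variable {B : Type*} [CStarAlgebra B]

theorem star_mul_self_add_star_mul_self_of_isStarProjection {R : Type*} [Ring R] [StarRing R]
    {p : R} (hp : IsStarProjection p) (x : R) :
    star (p * x) * (p * x) + star (x - p * x) * (x - p * x) = star x * x := by
  simp only [star_sub, star_mul, hp.isSelfAdjoint.star_eq]
  calc star x * p * (p * x) + (star x - star x * p) * (x - p * x)
      = star x * x + 2 * (star x * (p * p) * x) - 2 * (star x * p * x) := by noncomm_ring
    _ = star x * x := by rw [hp.isIdempotentElem.eq, add_sub_cancel_right]

theorem star_mul_self_le_algebraMap_of_norm_sq_le {x : B} {c : ℝ} (hc : ‖x‖ ^ 2 ≤ c) :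
    star x * x ≤ algebraMap ℝ B c :=
  CStarAlgebra.star_mul_le_algebraMap_norm_sq.trans (algebraMap_mono B hc)

theorem isStarProjection_of_isIdempotentElem_of_norm_le_one {m : B} (hm : IsIdempotentElem m)
    (hnorm : ‖m‖ ≤ 1) : IsStarProjection m := by
  have hm_le : star m * m ≤ 1 := by
    simpa using star_mul_self_le_algebraMap_of_norm_sq_le (pow_le_one₀ (norm_nonneg m) hnorm)
  have hstar : star m * star m = star m := by rw [← star_mul, hm.eq]
  have hconj : m * (star m * m) * star m ≤ m * 1 * star m :=
    star_right_conjugate_le_conjugate hm_le m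
  have hdefect : star (star m - m * star m) * (star m - m * star m)
      = m * (star m * m) * star m - m * 1 * star m := by
    simp only [star_sub, star_mul, star_star]
    calc (m - m * star m) * (star m - m * star m)
        = m * star m - m * m * star m - m * (star m * star m) + m * (star m * m) * star m := by
          noncomm_ring
      _ = m * (star m * m) * star m - m * 1 * star m := by
          rw [hm.eq, hstar]; noncomm_ring
  have hself : star m = m * star m :=
    sub_eq_zero.mp <| (CStarRing.star_mul_self_eq_zero_iff _).mp <|
      le_antisymm (hdefect ▸ sub_nonpos.mpr hconj) (star_mul_self_nonneg _)
  refine ⟨hm, ?_⟩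
  rw [← IsSelfAdjoint.star_iff, hself]
  exact .mul_star_self m

/-- The linear map `T` is a left M-projection of the C⋆-algebra `B`, with the column norm
condition imposed on `B` only and not on its matrix amplifications. -/
structure IsLeftMProjection (T : B →ₗ[ℂ] B) : Prop where
  apply_apply : ∀ x, T (T x) = T x
  norm_column : ∀ x, ‖star (T x) * T x + star (x - T x) * (x - T x)‖ = ‖x‖ ^ 2

theorem isLeftMProjection_mulLeft {p : B} (hp : IsStarProjection p) :
    IsLeftMProjection (LinearMap.mulLeft ℂ p) where
  apply_apply x := by simp only [LinearMap.mulLeft_apply, ← mul_assoc, hp.isIdempotentElem.eq]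
  norm_column x := by
    simp only [LinearMap.mulLeft_apply, star_mul_self_add_star_mul_self_of_isStarProjection hp,
      CStarRing.norm_star_mul_self, sq]

namespace IsLeftMProjection

variable {T : B →ₗ[ℂ] B}

theorem norm_apply_le (hT : IsLeftMProjection T) (x : B) : ‖T x‖ ≤ ‖x‖ := by
  refine le_of_sq_le_sq ?_ (norm_nonneg x)
  calc ‖T x‖ ^ 2 = ‖star (T x) * T x‖ := by rw [CStarRing.norm_star_mul_self, sq]
    _ ≤ ‖star (T x) * T x + star (x - T x) * (x - T x)‖ :=
      CStarAlgebra.norm_le_norm_of_nonneg_of_le (star_mul_self_nonneg _)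
        (le_add_of_nonneg_right (star_mul_self_nonneg _))
    _ = ‖x‖ ^ 2 := hT.norm_column x

theorem isStarProjection_apply_one (hT : IsLeftMProjection T) (hone : IsIdempotentElem (T 1)) :
    IsStarProjection (T 1) :=
  isStarProjection_of_isIdempotentElem_of_norm_le_one hone
    ((hT.norm_apply_le 1).trans (IsStarProjection.one B).norm_le)

theorem norm_mul_apply_add_le (hT : IsLeftMProjection T) {p : B} (hp : IsStarProjection p)
    (hpT : ∀ x, T (p * x) = p * T x) (x : B) : ‖p * T x + (1 - p) * x‖ ≤ ‖x‖ := by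
  set y := p * T x + (1 - p) * x with hy
  have hTy : T y = T x := by
    simp only [hy, sub_mul, one_mul, map_add, map_sub, hpT, hT.apply_apply]
    abel
  have hsub : y - T x = (1 - p) * (x - T x) := by rw [hy]; noncomm_ring
  have hdom : star (y - T x) * (y - T x) ≤ star (x - T x) * (x - T x) := by
    rw [hsub, ← star_mul_self_add_star_mul_self_of_isStarProjection hp.one_sub (x - T x)]
    exact le_add_of_nonneg_right (star_mul_self_nonneg _)
  refine le_of_sq_le_sq ?_ (norm_nonneg x)
  calc ‖y‖ ^ 2 = ‖star (T x) * T x + star (y - T x) * (y - T x)‖ := by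
        rw [← hT.norm_column y, hTy]
    _ ≤ ‖star (T x) * T x + star (x - T x) * (x - T x)‖ :=
      CStarAlgebra.norm_le_norm_of_nonneg_of_le
        (add_nonneg (star_mul_self_nonneg _) (star_mul_self_nonneg _)) (by gcongr)
    _ = ‖x‖ ^ 2 := hT.norm_column x

theorem mul_apply_mul_eq_zero (hT : IsLeftMProjection T) {p : B} (hp : IsStarProjection p)
    (hpT : ∀ x, T (p * x) = p * T x) {x v : B} {c : ℝ} (hxc : ‖x‖ ^ 2 ≤ c)
    (hv : star x * x * v = algebraMap ℝ B c * v) (hpv : p * x * v = 0) : p * T x * v = 0 := by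
  set y := p * T x + (1 - p) * x with hy
  have hyc : ‖y‖ ^ 2 ≤ c :=
    (pow_le_pow_left₀ (norm_nonneg y) (hT.norm_mul_apply_add_le hp hpT x) 2).trans hxc
  have hyv : y * v = p * T x * v + x * v := by
    rw [hy, ← sub_zero (p * T x * v + x * v), ← hpv]; noncomm_ring
  have hcross : star (p * T x * v) * (x * v) = 0 := by
    calc star (p * T x * v) * (x * v) = star (T x * v) * (p * x * v) := by
          simp only [star_mul, hp.isSelfAdjoint.star_eq, mul_assoc]
      _ = 0 := by rw [hpv, mul_zero]
  have hpythagoras : star v * (star y * y) * v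
      = star (p * T x * v) * (p * T x * v) + star v * (star x * x) * v := by
    calc star v * (star y * y) * v = star (y * v) * (y * v) := by simp only [star_mul, mul_assoc]
      _ = star (p * T x * v) * (p * T x * v) + star (p * T x * v) * (x * v)
          + star (star (p * T x * v) * (x * v)) + star (x * v) * (x * v) := by
        rw [hyv]; simp only [star_add, star_mul, star_star]; noncomm_ring
      _ = _ := by rw [hcross]; simp only [star_zero, add_zero, star_mul, mul_assoc]
  have hle : star (p * T x * v) * (p * T x * v) + star v * (star x * x) * v
      ≤ star v * (star x * x) * v := by
    rw [← hpythagoras, mul_assoc _ (star x * x), hv, ← mul_assoc (star v) (algebraMap ℝ B c)]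
    exact star_left_conjugate_le_conjugate (star_mul_self_le_algebraMap_of_norm_sq_le hyc) v
  exact (CStarRing.star_mul_self_eq_zero_iff _).mp <|
    le_antisymm (by simpa using hle) (star_mul_self_nonneg _)

end IsLeftMProjection

end CStar

section MatrixUnits

open Matrix

variable {R n : Type*} [Fintype n] [DecidableEq n]

theorem single_one_mul_map {S m : Type*} [NonAssocSemiring R] [NonAssocSemiring S] {f : R → S}
    (hf : f 0 = 0) (i : n) (x : Matrix n m R) :
    (single i i (1 : R) * x).map f = single i i (1 : S) * x.map f := by
  ext a b
  obtain rfl | hai := eq_or_ne a i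
  · simp
  · simp [hai, hf]

theorem isStarProjection_diagonal [NonUnitalSemiring R] [StarRing R] {e : R}
    (he : IsStarProjection e) : IsStarProjection (diagonal fun _ : n ↦ e) where
  isIdempotentElem := by simp [IsIdempotentElem, he.isIdempotentElem.eq]
  isSelfAdjoint := by
    simp [IsSelfAdjoint, star_eq_conjTranspose, diagonal_conjTranspose, Pi.star_def,
      he.isSelfAdjoint.star_eq]

variable [Ring R] [StarRing R]

theorem isStarProjection_single_one (i : n) : IsStarProjection (single i i (1 : R)) where
  isIdempotentElem := by simp [IsIdempotentElem]
  isSelfAdjoint := by simp [IsSelfAdjoint, star_eq_conjTranspose]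

/-- The matrix with block `[1, u; -u⋆, 1]` in the rows and columns `i, j` and zeros elsewhere.
For unitary `u` this is `√2` times a rotation of that block. -/
def planeRotation (i j : n) (u : R) : Matrix n n R :=
  single i i 1 + single i j u - single j i (star u) + single j j 1

/-- The column `(-u, 1)`, placed in the rows `i, j` of the column `i`. -/
def planeVector (i j : n) (u : R) : Matrix n n R :=
  single j i 1 - single i i u

theorem star_planeRotation_mul_self {i j : n} (hij : i ≠ j) {u : R} (hu : u ∈ unitary R) :
    star (planeRotation i j u) * planeRotation i j u = 2 * (single i i 1 + single j j 1) := by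
  simp only [planeRotation, star_add, star_sub, star_eq_conjTranspose, conjTranspose_single,
    star_one, star_star, mul_add, mul_sub, add_mul, sub_mul, single_mul_single_same, mul_one,
    one_mul, ne_eq, hij, hij.symm, not_false_eq_true, single_mul_single_of_ne, sub_zero, add_zero,
    zero_sub, Unitary.star_mul_self_of_mem hu, Unitary.mul_star_self_of_mem hu, two_mul]
  abel

theorem star_planeRotation_mul_self_mul_planeVector {i j : n} (hij : i ≠ j) {u : R}
    (hu : u ∈ unitary R) :
    star (planeRotation i j u) * planeRotation i j u * planeVector i j u
      = 2 * planeVector i j u := by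
  rw [star_planeRotation_mul_self hij hu, mul_assoc]
  congr 1
  simp [planeVector, add_mul, mul_sub, hij, hij.symm]

theorem single_mul_planeRotation_mul_planeVector {i j : n} (hij : i ≠ j) (u : R) :
    single i i 1 * planeRotation i j u * planeVector i j u = 0 := by
  simp [planeRotation, planeVector, mul_add, add_mul, mul_sub, hij, hij.symm]

theorem single_mul_map_planeRotation_mul_planeVector {i j : n} (hij : i ≠ j) (P : R →+ R) (u : R) :
    single i i 1 * (planeRotation i j u).map P * planeVector i j u
      = single i i (P u) - single i i (P 1 * u) := by
  have hmap : (planeRotation i j u).map P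
      = single i i (P 1) + single i j (P u) - single j i (P (star u)) + single j j (P 1) := by
    simp only [planeRotation, Matrix.map_add _ (map_add P), Matrix.map_sub _ (map_sub P),
      map_single]
  simp [hmap, planeVector, mul_add, add_mul, mul_sub, hij, hij.symm]

end MatrixUnits

section Amplification

open Matrix

variable {A B n : Type*} [CStarAlgebra A] [CStarAlgebra B] [Fintype n] [DecidableEq n]

/-- The entrywise action `Pₙ` of `P` on matrices, carried to a C⋆-algebra `B` along a
⋆-isomorphism `φ : Mₙ(A) ≃ B`, so that norms are those of `B`. -/
noncomputable def amplification (φ : Matrix n n A ≃⋆ₐ[ℂ] B) (P : A →ₗ[ℂ] A) : B →ₗ[ℂ] B :=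
  φ.toAlgEquiv.toLinearEquiv.conj P.mapMatrix

variable (φ : Matrix n n A ≃⋆ₐ[ℂ] B)

theorem amplification_apply (P : A →ₗ[ℂ] A) (x : Matrix n n A) :
    amplification φ P (φ x) = φ (x.map P) :=
  congrArg (fun y ↦ φ (y.map P)) (φ.symm_apply_apply x)

theorem isLeftMProjection_amplification_iff {P : A →ₗ[ℂ] A} (hP : ∀ x, P (P x) = P x) :
    IsLeftMProjection (amplification φ P) ↔ ∀ x : Matrix n n A,
      ‖φ (star (x.map P) * x.map P + star (x - x.map P) * (x - x.map P))‖ = ‖φ x‖ ^ 2 := by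
  simp only [map_add, map_mul, map_star, map_sub, ← amplification_apply]
  refine ⟨fun hT x ↦ hT.norm_column (φ x), fun h ↦ ⟨fun b ↦ ?_, fun b ↦ ?_⟩⟩
  · obtain ⟨x, rfl⟩ := EquivLike.surjective φ b
    simp only [amplification_apply, map_map, Function.comp_def, hP]
  · obtain ⟨x, rfl⟩ := EquivLike.surjective φ b
    exact h x

theorem amplification_mulLeft (e : A) : amplification φ (LinearMap.mulLeft ℂ e)
    = LinearMap.mulLeft ℂ (φ (diagonal fun _ ↦ e)) := by
  refine LinearMap.ext <| (EquivLike.surjective φ).forall.mpr fun x ↦ ?_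
  rw [amplification_apply, LinearMap.mulLeft_apply, ← map_mul]
  congr 1
  ext i j
  simp

theorem isLeftMProjection_amplification_mulLeft {e : A} (he : IsStarProjection e) :
    IsLeftMProjection (amplification φ (LinearMap.mulLeft ℂ e)) := by
  rw [amplification_mulLeft]
  exact isLeftMProjection_mulLeft ((isStarProjection_diagonal he).map φ)

theorem norm_map_planeRotation_sq_le {i j : n} (hij : i ≠ j) {u : A} (hu : u ∈ unitary A) :
    ‖φ (planeRotation i j u)‖ ^ 2 ≤ 2 := by
  have hproj : IsStarProjection (φ (single i i 1 + single j j 1)) :=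
    ((isStarProjection_single_one i).add (isStarProjection_single_one j) (by simp [hij])).map φ
  rw [sq, ← CStarRing.norm_star_mul_self, ← map_star, ← map_mul,
    star_planeRotation_mul_self hij hu, two_mul, map_add, ← one_add_one_eq_two]
  exact norm_add_le_of_le hproj.norm_le hproj.norm_le

variable {φ} {P : A →ₗ[ℂ] A}

theorem apply_unitary_of_isLeftMProjection_amplification [Nontrivial n]
    (hT : IsLeftMProjection (amplification φ P)) {u : A} (hu : u ∈ unitary A) :
    P u = P 1 * u := by
  obtain ⟨i, j, hij⟩ := exists_pair_ne n
  have hcomm (b : B) : amplification φ P (φ (single i i 1) * b)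
      = φ (single i i 1) * amplification φ P b := by
    obtain ⟨x, rfl⟩ := EquivLike.surjective φ b
    rw [← map_mul, amplification_apply, amplification_apply, single_one_mul_map (map_zero P),
      map_mul]
  have hzero : φ (single i i 1) * amplification φ P (φ (planeRotation i j u))
      * φ (planeVector i j u) = 0 := by
    refine hT.mul_apply_mul_eq_zero ((isStarProjection_single_one i).map φ) hcomm
      (norm_map_planeRotation_sq_le φ hij hu) ?_ ?_
    · rw [← map_star, ← map_mul, ← map_mul, star_planeRotation_mul_self_mul_planeVector hij hu,
        map_mul, map_ofNat, map_ofNat]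
    · rw [← map_mul, ← map_mul, single_mul_planeRotation_mul_planeVector hij, map_zero]
  rw [amplification_apply, ← map_mul, ← map_mul, EmbeddingLike.map_eq_zero_iff] at hzero
  have hsingle : single i i (P u) - single i i (P 1 * u) = 0 :=
    (single_mul_map_planeRotation_mul_planeVector hij P.toAddMonoidHom u).symm.trans hzero
  exact sub_eq_zero.mp <| by
    simpa only [Matrix.sub_apply, single_apply_same, Matrix.zero_apply]
      using congr_fun₂ hsingle i i

theorem eq_mulLeft_of_isLeftMProjection_amplification [Nontrivial n]
    (hT : IsLeftMProjection (amplification φ P)) : P = LinearMap.mulLeft ℂ (P 1) :=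
  LinearMap.ext_on (CStarAlgebra.span_unitary A) fun _ hu ↦
    apply_unitary_of_isLeftMProjection_amplification hT hu

theorem isStarProjection_apply_one_of_isLeftMProjection_amplification [Nonempty n]
    (hT : IsLeftMProjection (amplification φ P)) (hone : IsIdempotentElem (P 1)) :
    IsStarProjection (P 1) := by
  have hdiag : amplification φ P 1 = φ (diagonal fun _ ↦ P 1) := by
    rw [← map_one φ, amplification_apply, ← diagonal_one, diagonal_map (map_zero P)]
  have hproj : IsStarProjection (diagonal fun _ : n ↦ P 1) := by
    have hone_amp : IsIdempotentElem (amplification φ P 1) := by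
      rw [hdiag]
      exact .map (by simp [IsIdempotentElem, hone.eq]) φ
    simpa [hdiag] using (hT.isStarProjection_apply_one hone_amp).map φ.symm
  obtain ⟨i⟩ := ‹Nonempty n›
  have hstar : star (P 1) = P 1 := by
    simpa [star_eq_conjTranspose] using congr_fun₂ hproj.isSelfAdjoint.star_eq i i
  exact ⟨hone, hstar⟩

end Amplification

theorem stmt_0_general {A : Type*} [CStarAlgebra A]
    (Mat : ℕ → Type*) [∀ n, CStarAlgebra (Mat n)]
    (ι : ∀ n, Matrix (Fin n) (Fin n) A ≃⋆ₐ[ℂ] Mat n)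
    (P : A →ₗ[ℂ] A) {levels : Set ℕ} (hlevels : ∃ n ∈ levels, 2 ≤ n) :
    ((∀ x : A, P (P x) = P x) ∧
      ∀ n ∈ levels, ∀ x : Matrix (Fin n) (Fin n) A,
        ‖ι n (star (x.map P) * x.map P + star (x - x.map P) * (x - x.map P))‖
          = ‖ι n x‖ ^ 2) ↔
    ∃ e : A, star e = e ∧ e * e = e ∧ e = P 1 ∧ ∀ x : A, P x = e * x := by
  constructor
  · rintro ⟨hP, hnorm⟩
    obtain ⟨n, hn, htwo⟩ := hlevels
    have : Nontrivial (Fin n) := Fin.nontrivial_iff_two_le.mpr htwo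
    have hT := (isLeftMProjection_amplification_iff (ι n) hP).mpr (hnorm n hn)
    have hmul (x : A) : P x = P 1 * x :=
      LinearMap.congr_fun (eq_mulLeft_of_isLeftMProjection_amplification hT) x
    have hone : IsIdempotentElem (P 1) := (hmul (P 1)).symm.trans (hP 1)
    have hproj := isStarProjection_apply_one_of_isLeftMProjection_amplification hT hone
    exact ⟨P 1, hproj.isSelfAdjoint, hproj.isIdempotentElem, rfl, hmul⟩
  · rintro ⟨e, hstar, hidem, -, hmul⟩
    have hP (x : A) : P (P x) = P x := by rw [hmul, hmul, ← mul_assoc, hidem]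
    obtain rfl : P = LinearMap.mulLeft ℂ e := LinearMap.ext hmul
    exact ⟨hP, fun n _ ↦ (isLeftMProjection_amplification_iff (ι n) hP).mp
      (isLeftMProjection_amplification_mulLeft (ι n) ⟨hidem, hstar⟩)⟩

/-- Let `A` be a unital C*-algebra and `P : A → A` a linear map.  The C*-algebra
`Mₙ(A)` of `n × n` matrices over `A` (with its unique C*-norm) is modelled by an arbitrary
C*-algebra `Mat n` together with a ⋆-algebra isomorphism `ι n` from the ⋆-algebra of matrices
`Matrix (Fin n) (Fin n) A`; the norm of a matrix `x` is then `‖ι n x‖`.  `P` is a complete left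
`M`-projection (it is idempotent and, for every `n ≥ 1` and every `x ∈ Mₙ(A)`,
`‖(Pₙx)*(Pₙx) + (x − Pₙx)*(x − Pₙx)‖ = ‖x‖²`, where `Pₙ = x.map P` is the entrywise application)
iff there is a self-adjoint idempotent `e ∈ A` — necessarily `e = P(1)` — with `P(x) = e·x`
for all `x`. -/
theorem stmt_0 {A : Type*} [CStarAlgebra A]
    (Mat : ℕ → Type*) [∀ n, CStarAlgebra (Mat n)]
    (ι : ∀ n, Matrix (Fin n) (Fin n) A ≃⋆ₐ[ℂ] Mat n)
    (P : A →ₗ[ℂ] A) :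
    ((∀ x : A, P (P x) = P x) ∧
      ∀ n : ℕ, 1 ≤ n → ∀ x : Matrix (Fin n) (Fin n) A,
        ‖ι n (star (x.map P) * x.map P + star (x - x.map P) * (x - x.map P))‖
          = ‖ι n x‖ ^ 2) ↔
    ∃ e : A, star e = e ∧ e * e = e ∧ e = P 1 ∧ ∀ x : A, P x = e * x :=
  stmt_0_general Mat ι P (levels := {n | 1 ≤ n}) ⟨2, by simp, le_rfl⟩
end

section
/- Let M be a von Neumann algebra acting on a complex Hilbert space H and let φ : M → M be a linear map. Then there exists b ∈ M with ‖b‖ ≤ 1 such that φ(x) = b·x for all x ∈ M if and only if for all x, y ∈ M one has ‖φ(x)*φ(x) + y*y‖ ≤ ‖x*x + y*y‖. Moreover, in that case one may take b = φ(1). -/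
/-!
If `y*y = ‖x‖² - x*x`, then `x*x + y*y` is the scalar `‖x‖²`, and the column inequality at `(x, y)`
gives `φ(x)*φ(x) ≤ x*x`. Conjugating by `x⁻¹` yields `‖φ(x) x⁻¹‖ ≤ 1` for invertible `x`. Hence for
each `a` the entire function `z ↦ φ(exp(za)) exp(-za)` is bounded, so constant by Liouville, and its
derivative at `0`, which is `φ(a) - φ(1)a`, vanishes.
-/

section Liouville

open NormedSpace

theorem bilinear_apply_one_eq_of_forall_norm_exp_exp_neg_le {A E : Type*} [NormedRing A]
    [NormedAlgebra ℂ A] [CompleteSpace A] [NormedAddCommGroup E] [NormedSpace ℂ E]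
    (β : A →L[ℂ] A →L[ℂ] E) {C : ℝ} (hβ : ∀ x, ‖β (exp x) (exp (-x))‖ ≤ C) (a : A) :
    β a 1 = β 1 a := by
  let f : ℂ → E := fun z => β (exp (z • a)) (exp (z • -a))
  have hf : ∀ z, HasDerivAt f
      (β (exp (z • a)) (exp (z • -a) * -a) + β (exp (z • a) * a) (exp (z • -a))) z := fun z =>
    β.hasDerivAt_of_bilinear (fun _ => hasDerivAt_exp_smul_const a z)
      (fun _ => hasDerivAt_exp_smul_const (-a) z)
  have bounded : Bornology.IsBounded (Set.range f) := by
    refine isBounded_iff_forall_norm_le.2 ⟨C, ?_⟩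
    rintro _ ⟨z, rfl⟩
    simpa only [f, smul_neg] using hβ (z • a)
  obtain ⟨c, hc⟩ : ∃ c, f = Function.const ℂ c :=
    Differentiable.exists_eq_const_of_bounded (fun z => (hf z).differentiableAt) bounded
  have deriv_zero : HasDerivAt f (-β 1 a + β a 1) 0 := by simpa using hf 0
  have deriv_const : HasDerivAt f 0 0 := hc ▸ hasDerivAt_const 0 c
  exact (neg_add_eq_zero.1 (deriv_zero.unique deriv_const)).symm

end Liouville

section Order

variable {A : Type*} [NonUnitalCStarAlgebra A] [PartialOrder A] [StarOrderedRing A]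

theorem norm_mul_le_norm_mul_of_star_mul_self_le {a b : A} (h : star a * a ≤ star b * b) (u : A) :
    ‖a * u‖ ≤ ‖b * u‖ := by
  have hu : star (a * u) * (a * u) ≤ star (b * u) * (b * u) := by
    simpa only [star_mul, mul_assoc] using star_left_conjugate_le_conjugate h u
  have hsq := CStarAlgebra.norm_le_norm_of_nonneg_of_le (star_mul_self_nonneg _) hu
  rw [CStarRing.norm_star_mul_self, CStarRing.norm_star_mul_self] at hsq
  exact (mul_self_le_mul_self_iff (norm_nonneg _) (norm_nonneg _)).2 hsq

theorem star_mul_self_mul_le_of_norm_le_one {b : A} (hb : ‖b‖ ≤ 1) (x : A) :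
    star (b * x) * (b * x) ≤ star x * x := by
  have hbb : ‖star b * b‖ ≤ 1 := by
    rw [CStarRing.norm_star_mul_self]
    exact mul_le_one₀ hb (norm_nonneg b) hb
  calc star (b * x) * (b * x) = star x * (star b * b) * x := by simp only [star_mul, mul_assoc]
    _ ≤ ‖star b * b‖ • (star x * x) :=
      CStarAlgebra.star_left_conjugate_le_norm_smul (.star_mul_self b)
    _ ≤ star x * x := smul_le_of_le_one_left (star_mul_self_nonneg x) hbb

end Order

theorem exists_star_mul_self_add_star_mul_self_eq_algebraMap {A : Type*} [CStarAlgebra A] (x : A) :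
    ∃ y : A, star x * x + star y * y = algebraMap ℝ A (‖x‖ ^ 2) := by
  let _ := CStarAlgebra.spectralOrder A
  have := CStarAlgebra.spectralOrderedRing A
  have hx : star x * x ≤ algebraMap ℝ A (‖x‖ ^ 2) := CStarAlgebra.star_mul_le_algebraMap_norm_sq
  obtain ⟨y, hy⟩ := CStarAlgebra.nonneg_iff_eq_star_mul_self.1 (sub_nonneg.2 hx)
  exact ⟨y, by rw [← hy, add_sub_cancel]⟩

section Column

open NormedSpace

variable {A B : Type*} [CStarAlgebra A] [CStarAlgebra B]

theorem star_mul_self_le_of_forall_norm_add_le [PartialOrder B] [StarOrderedRing B]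
    (π : A →⋆ₐ[ℂ] B) {c : B} {x : A}
    (h : ∀ y, ‖star c * c + star (π y) * π y‖ ≤ ‖star (π x) * π x + star (π y) * π y‖) :
    star c * c ≤ star (π x) * π x := by
  obtain ⟨y, hy⟩ := exists_star_mul_self_add_star_mul_self_eq_algebraMap x
  have hπy : star (π x) * π x + star (π y) * π y = algebraMap ℝ B (‖x‖ ^ 2) := by
    rw [← map_star, ← map_mul, ← map_star, ← map_mul, ← map_add, hy]
    exact (π.toAlgHom.restrictScalars ℝ).commutes _
  have hnorm : ‖star c * c + star (π y) * π y‖ ≤ ‖x‖ ^ 2 :=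
    calc ‖star c * c + star (π y) * π y‖ ≤ ‖algebraMap ℝ B (‖x‖ ^ 2)‖ := hπy ▸ h y
      _ = ‖x‖ ^ 2 * ‖(1 : B)‖ := by rw [norm_algebraMap, Real.norm_of_nonneg (sq_nonneg _)]
      _ ≤ ‖x‖ ^ 2 := mul_le_of_le_one_right (sq_nonneg _) (IsStarProjection.norm_le 1 (.one B))
  rw [CStarAlgebra.norm_le_iff_le_algebraMap _ (sq_nonneg _)
    (add_nonneg (star_mul_self_nonneg c) (star_mul_self_nonneg (π y))), ← hπy] at hnorm
  exact le_of_add_le_add_right hnorm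

theorem apply_eq_apply_one_mul_of_forall_star_mul_self_le [PartialOrder B] [StarOrderedRing B]
    (π : A →⋆ₐ[ℂ] B) {φ : A →ₗ[ℂ] B} (h : ∀ x, star (φ x) * φ x ≤ star (π x) * π x) (a : A) :
    φ a = φ 1 * π a := by
  have hmul : ∀ x u, ‖φ x * π u‖ ≤ ‖π (x * u)‖ := fun x u => by
    simpa only [map_mul] using norm_mul_le_norm_mul_of_star_mul_self_le (h x) (π u)
  have hπ : ∀ x, ‖π x‖ ≤ 1 * ‖x‖ := fun x => by
    simpa only [one_mul] using NonUnitalStarAlgHom.norm_apply_le π x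
  have hφ : ∀ x, ‖φ x‖ ≤ 1 * ‖x‖ := fun x => by
    simpa only [map_one, mul_one] using (hmul x 1).trans (hπ (x * 1))
  let β : A →L[ℂ] A →L[ℂ] B := (ContinuousLinearMap.mul ℂ B).bilinearComp
    (φ.mkContinuous 1 hφ) (π.toAlgHom.toLinearMap.mkContinuous 1 hπ)
  have hβ_apply : ∀ x u, β x u = φ x * π u := fun _ _ => rfl
  have hβ : ∀ x, ‖β (exp x) (exp (-x))‖ ≤ ‖(1 : B)‖ := fun x => by
    let _ : NormedAlgebra ℚ A := .restrictScalars ℚ ℂ A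
    have hexp : exp x * exp (-x) = 1 := by
      rw [← exp_add_of_commute (Commute.refl x).neg_right, add_neg_cancel, exp_zero]
    simpa only [hβ_apply, hexp, map_one] using hmul (exp x) (exp (-x))
  simpa only [hβ_apply, map_one, mul_one] using
    bilinear_apply_one_eq_of_forall_norm_exp_exp_neg_le β hβ a

end Column

theorem stmt_1_general {A B : Type*} [CStarAlgebra A] [CStarAlgebra B] (π : A →⋆ₐ[ℂ] B)
    (φ : A →ₗ[ℂ] B) :
    (∃ b : B, ‖b‖ ≤ 1 ∧ b = φ 1 ∧ ∀ x, φ x = b * π x) ↔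
      ∀ x y, ‖star (φ x) * φ x + star (π y) * π y‖ ≤ ‖star (π x) * π x + star (π y) * π y‖ := by
  let _ := CStarAlgebra.spectralOrder B
  have := CStarAlgebra.spectralOrderedRing B
  constructor
  · rintro ⟨b, hb, -, hφ⟩ x y
    have hle : star (φ x) * φ x ≤ star (π x) * π x :=
      hφ x ▸ star_mul_self_mul_le_of_norm_le_one hb (π x)
    exact CStarAlgebra.norm_le_norm_of_nonneg_of_le
      (add_nonneg (star_mul_self_nonneg _) (star_mul_self_nonneg _)) (by gcongr)
  · intro h
    have hle : ∀ x, star (φ x) * φ x ≤ star (π x) * π x := fun x =>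
      star_mul_self_le_of_forall_norm_add_le π (h x)
    have hφ1 : ‖φ 1‖ ≤ 1 := calc
      ‖φ 1‖ ≤ ‖(1 : B)‖ := by simpa using norm_mul_le_norm_mul_of_star_mul_self_le (hle 1) 1
      _ ≤ 1 := IsStarProjection.norm_le 1 (.one B)
    exact ⟨φ 1, hφ1, rfl, apply_eq_apply_one_mul_of_forall_star_mul_self_le π hle⟩

theorem isClosed_toStarSubalgebra {H : Type*} [NormedAddCommGroup H] [InnerProductSpace ℂ H]
    [CompleteSpace H] (M : VonNeumannAlgebra H) :
    IsClosed (M.toStarSubalgebra : Set (H →L[ℂ] H)) := by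
  rw [VonNeumannAlgebra.coe_toStarSubalgebra, ← M.centralizer_centralizer]
  exact Set.isClosed_centralizer _

/-- Let `M` be a von Neumann algebra on a complex Hilbert space `H` and
`φ : M → M` a linear map.  Then there is `b ∈ M` with `‖b‖ ≤ 1` and `φ(x) = b·x` for all
`x ∈ M` iff `‖φ(x)*φ(x) + y*y‖ ≤ ‖x*x + y*y‖` for all `x, y ∈ M` (the column map
`(x,y) ↦ (φ(x), y)` is contractive on `C₂(M)`); moreover one may then take `b = φ(1)`. -/
theorem stmt_1 {H : Type*} [NormedAddCommGroup H] [InnerProductSpace ℂ H] [CompleteSpace H]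
    (M : VonNeumannAlgebra H)
    (φ : M.toStarSubalgebra →ₗ[ℂ] M.toStarSubalgebra) :
    (∃ b : H →L[ℂ] H, b ∈ M ∧ ‖b‖ ≤ 1 ∧ b = (φ 1 : H →L[ℂ] H) ∧
        ∀ x : M.toStarSubalgebra, (φ x : H →L[ℂ] H) = b * (x : H →L[ℂ] H)) ↔
      ∀ x y : M.toStarSubalgebra,
        ‖star ((φ x : H →L[ℂ] H)) * (φ x : H →L[ℂ] H) +
            star ((y : H →L[ℂ] H)) * (y : H →L[ℂ] H)‖ ≤
          ‖star ((x : H →L[ℂ] H)) * (x : H →L[ℂ] H) +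
            star ((y : H →L[ℂ] H)) * (y : H →L[ℂ] H)‖ := by
  have := isClosed_toStarSubalgebra M
  let ι := M.toStarSubalgebra.subtype
  have general := stmt_1_general ι (ι.toAlgHom.toLinearMap ∘ₗ φ)
  exact Iff.trans ⟨fun ⟨b, _, h⟩ => ⟨b, h⟩,
    fun ⟨b, hb, hφ, h⟩ => ⟨b, hφ ▸ (φ 1).2, hb, hφ, h⟩⟩ general
end

section
/- Let B be a C*-algebra, let A ⊆ B be a norm-closed subalgebra containing the unit of B, and let P : A → A be a linear map. Then P is a complete left M-projection (i.e., P∘P = P and for every n ≥ 1 and every n×n matrix x over A, ‖(Pₙx)*(Pₙx) + (x − Pₙx)*(x − Pₙx)‖ = ‖x‖², the norm being that of Mₙ(B)) if and only if there exists e ∈ A which is a self-adjoint idempotent in B (e = e* = e²) such that P(x) = e·x for all x ∈ A. -/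
/-!
Only columns of length two matter: the norm identity gives
`‖(P x)* P x + (x - P x)* (x - P x) + (same for y)‖ = ‖x* x + y* y‖` for `x, y ∈ A`. Hence for
`|μ| = 1` the map `x ↦ x + (μ - 1) P x`, applied to one entry of a column, preserves its norm.

Let `e = P 1`. Taking `x = 1` gives `‖1 + (μ - 1) e‖ ≤ 1` on the unit circle, so
`Re ((1 - μ) e) ≥ 0`; letting the direction of `1 - μ` tend to `± i` shows `e = e*`.

Let `U = 1 - 2 P` be the involution at `μ = -1`. Columns `(√t x, 1 - t w)` with `t → 0` turn norms
into order: `x* x ≤ w + w*` implies `(U x)* (U x) ≤ w + w*` for `x, w ∈ A`. For `x = 1` and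
`x = U 1`, where `(U 1)²` is in `A` because `U 1` is self-adjoint, this gives `(U 1)² = 1`. For
`t + x` with `t ∈ ℝ`, compare the terms linear in `t` to obtain `(U 1)* U x = x`. Together
`U x = (U 1) x`, that is, `P x = e x`.
-/

theorem nonpos_of_forall_pos_le_smul {E : Type*} [AddCommMonoid E] [Preorder E] [Module ℝ E]
    [TopologicalSpace E] [ContinuousSMul ℝ E] [ClosedIciTopology E] {a c : E}
    (h : ∀ t : ℝ, 0 < t → a ≤ t • c) : a ≤ 0 := by
  have hlim : Filter.Tendsto (fun t : ℝ => t • c) (nhdsWithin 0 (Set.Ioi 0)) (nhds 0) := by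
    have hcont : Continuous fun t : ℝ => t • c := by fun_prop
    simpa using (hcont.tendsto 0).mono_left nhdsWithin_le_nhds
  exact ge_of_tendsto hlim (by filter_upwards [self_mem_nhdsWithin] with t ht using h t ht)

theorem eq_zero_of_forall_smul_le {E : Type*} [AddCommGroup E] [PartialOrder E]
    [IsOrderedAddMonoid E] [Module ℝ E] [PosSMulMono ℝ E] [TopologicalSpace E]
    [ContinuousSMul ℝ E] [ClosedIciTopology E] {a c : E} (h : ∀ t : ℝ, t • a ≤ c) : a = 0 := by
  refine le_antisymm (nonpos_of_forall_pos_le_smul (c := c) fun t ht => ?_)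
    (neg_nonpos.1 <| nonpos_of_forall_pos_le_smul (c := c) fun t ht => ?_)
  · exact (inv_smul_le_iff_of_pos ht).1 (h t⁻¹)
  · exact (inv_smul_le_iff_of_pos ht).1 (by simpa using h (-t⁻¹))

theorem star_smul_add_mul_self {R : Type*} [NonUnitalRing R] [StarRing R] [Module ℝ R]
    [StarModule ℝ R] [IsScalarTower ℝ R R] [SMulCommClass ℝ R R] (t : ℝ) (a b : R) :
    star (t • a + b) * (t • a + b) =
      t ^ 2 • (star a * a) + t • (star a * b + star (star a * b)) + star b * b := by
  simp only [star_add, star_smul, star_trivial, star_mul, star_star, add_mul, mul_add,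
    smul_mul_assoc, mul_smul_comm]
  module

section CStarAlgebra

variable {B : Type*} [CStarAlgebra B] [PartialOrder B] [StarOrderedRing B]

theorem add_star_nonneg_of_norm_one_sub_le_one {b : B} (h : ‖1 - b‖ ≤ 1) : 0 ≤ b + star b := by
  have hle : star (1 - b) * (1 - b) ≤ 1 :=
    (CStarAlgebra.norm_le_one_iff_of_nonneg _ (star_mul_self_nonneg _)).1 <| by
      rw [CStarRing.norm_star_mul_self]
      exact mul_le_one₀ h (norm_nonneg _) h
  calc 0 ≤ star b * b := star_mul_self_nonneg b
    _ ≤ star b * b + (1 - star (1 - b) * (1 - b)) := le_add_of_nonneg_right (sub_nonneg.2 hle)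
    _ = b + star b := by rw [star_sub, star_one]; noncomm_ring

theorem smul_add_star_nonneg_of_forall_norm_le_one {e : B}
    (h : ∀ μ : ℂ, ‖μ‖ = 1 → ‖1 + (μ - 1) • e‖ ≤ 1) {z : ℂ} (hz : 0 < z.re) :
    0 ≤ z • e + star (z • e) := by
  have hz0 : 0 < Complex.normSq z := Complex.normSq_pos.2 fun hz' => by simp [hz'] at hz
  -- The value of `c` for which `1 - c z` lies on the unit circle.
  set c : ℝ := 2 * z.re / Complex.normSq z with hc
  have hc0 : 0 < c := by positivity
  have hμ : ‖1 - c * z‖ = 1 := by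
    have hinner : (c * z).re = c * z.re := Complex.re_ofReal_mul c z
    rw [Complex.norm_def, Real.sqrt_eq_one, Complex.normSq_sub, Complex.normSq_one,
      Complex.normSq_mul, Complex.normSq_ofReal, one_mul, Complex.conj_re, hinner, hc]
    field_simp
    ring
  have hnonneg : 0 ≤ c • (z • e + star (z • e)) := by
    have hb := h _ hμ
    rw [show 1 + (1 - c * z - 1) • e = 1 - c • z • e by
      rw [← Complex.coe_smul, smul_smul]; module] at hb
    simpa [smul_add] using add_star_nonneg_of_norm_one_sub_le_one hb
  simpa [smul_smul, hc0.ne'] using smul_nonneg (inv_nonneg.2 hc0.le) hnonneg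

theorem le_add_star_of_forall_norm_le {a b w : B} (ha : 0 ≤ a) (hb : IsSelfAdjoint b)
    (h : ∀ t : ℝ, 0 < t → ‖t • b + star (1 - t • w) * (1 - t • w)‖ ≤
      ‖t • a + star (1 - t • w) * (1 - t • w)‖)
    (haw : a ≤ w + star w) : b ≤ w + star w := by
  have hexpand (t : ℝ) : star (1 - t • w) * (1 - t • w) =
      1 - t • (w + star w) + t ^ 2 • (star w * w) := by
    rw [sub_eq_neg_add, ← neg_smul, star_smul_add_mul_self, star_one, mul_one, mul_one, star_star]
    module
  have hww : star w * w ≤ algebraMap ℝ B (‖w‖ ^ 2) := CStarAlgebra.star_mul_le_algebraMap_norm_sq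
  rw [← sub_nonpos]
  refine nonpos_of_forall_pos_le_smul (c := algebraMap ℝ B (‖w‖ ^ 2)) fun t ht => ?_
  have hnorm : ‖t • a + star (1 - t • w) * (1 - t • w)‖ ≤ 1 + t ^ 2 * ‖w‖ ^ 2 := by
    rw [CStarAlgebra.norm_le_iff_le_algebraMap _ (by positivity)
      (add_nonneg (smul_nonneg ht.le ha) (star_mul_self_nonneg _))]
    calc t • a + star (1 - t • w) * (1 - t • w)
        = 1 + t • (a - (w + star w)) + t ^ 2 • (star w * w) := by rw [hexpand]; module
      _ ≤ 1 + t • 0 + t ^ 2 • algebraMap ℝ B (‖w‖ ^ 2) := by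
        gcongr
        exact sub_nonpos.2 haw
      _ = algebraMap ℝ B (1 + t ^ 2 * ‖w‖ ^ 2) := by
        rw [smul_zero, add_zero, map_add, map_one, map_mul, ← Algebra.smul_def]
  have hsa : IsSelfAdjoint (t • b + star (1 - t • w) * (1 - t • w)) :=
    ((IsSelfAdjoint.all t).smul hb).add (.star_mul_self _)
  refine le_of_smul_le_smul_left ?_ ht
  calc t • (b - (w + star w))
      ≤ t • (b - (w + star w)) + t ^ 2 • (star w * w) :=
        le_add_of_nonneg_right (smul_nonneg (by positivity) (star_mul_self_nonneg w))
    _ = t • b + star (1 - t • w) * (1 - t • w) - 1 := by rw [hexpand]; module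
    _ ≤ algebraMap ℝ B (1 + t ^ 2 * ‖w‖ ^ 2) - 1 := by
        gcongr
        exact hsa.le_algebraMap_norm_self.trans (algebraMap_mono _ ((h t ht).trans hnorm))
    _ = t • t • algebraMap ℝ B (‖w‖ ^ 2) := by
        rw [map_add, map_one, add_sub_cancel_left, map_mul, ← Algebra.smul_def, smul_smul,
          ← pow_two]

end CStarAlgebra

section SpectralOrder

attribute [local instance] CStarAlgebra.spectralOrder CStarAlgebra.spectralOrderedRing

variable {B : Type*} [CStarAlgebra B]

theorem isSelfAdjoint_of_forall_norm_le_one {e : B}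
    (h : ∀ μ : ℂ, ‖μ‖ = 1 → ‖1 + (μ - 1) • e‖ ≤ 1) : IsSelfAdjoint e := by
  have hre (z : ℂ) (hz : 0 ≤ z.re) : 0 ≤ z • e + star (z • e) := by
    have hclosed : IsClosed {z : ℂ | 0 ≤ z • e + star (z • e)} :=
      isClosed_le (by fun_prop) (by fun_prop)
    refine closure_minimal (fun z hz => smul_add_star_nonneg_of_forall_norm_le_one h hz) hclosed ?_
    exact (Complex.closure_setOfPred_lt_re 0).symm ▸ hz
  have hI : Complex.I • (star e - e) = 0 := by
    refine le_antisymm (neg_nonneg.1 ?_) ?_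
    · convert hre Complex.I (by simp) using 1
      simp only [star_smul, RCLike.star_def, Complex.conj_I, neg_smul]
      module
    · convert hre (-Complex.I) (by simp) using 1
      simp only [neg_smul, star_neg, star_smul, RCLike.star_def, Complex.conj_I, neg_neg]
      module
  exact sub_eq_zero.1 ((smul_eq_zero_iff_right Complex.I_ne_zero).1 hI)

/-- `U` does not increase the norm of a column `(x, y)` over `A` when applied to its first entry
only; the column is normed by `‖x* x + y* y‖ = ‖(x, y)‖²`. -/
def IsColumnContraction {A : Subalgebra ℂ B} (U : A →ₗ[ℂ] A) : Prop :=
  ∀ x y : A, ‖star (U x : B) * U x + star (y : B) * y‖ ≤ ‖star (x : B) * x + star (y : B) * y‖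

namespace IsColumnContraction

variable {A : Subalgebra ℂ B} {U : A →ₗ[ℂ] A}

theorem star_mul_self_map_le_add_star (hU : IsColumnContraction U) {x w : A}
    (h : star (x : B) * x ≤ w + star (w : B)) : star (U x : B) * U x ≤ w + star (w : B) := by
  refine le_add_star_of_forall_norm_le (star_mul_self_nonneg _) (.star_mul_self _)
    (fun t ht => ?_) h
  simpa [smul_smul, Real.mul_self_sqrt ht.le] using hU ((√t : ℂ) • x) (1 - t • w)

theorem map_one_mul_map_one (hU : IsColumnContraction U) (hinv : ∀ x, U (U x) = x)
    (hsa : IsSelfAdjoint (U 1 : B)) : (U 1 : B) * U 1 = 1 := by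
  have hhalf (a : B) : a = (2⁻¹ : ℂ) • a + (2⁻¹ : ℂ) • a := by module
  apply le_antisymm
  · simpa [hsa.star_eq, ← hhalf] using
      hU.star_mul_self_map_le_add_star (x := 1) (w := (2⁻¹ : ℂ) • 1)
  · simpa [hsa.star_eq, ← hhalf, hinv] using
      hU.star_mul_self_map_le_add_star (x := U 1) (w := (2⁻¹ : ℂ) • (U 1 * U 1))

theorem star_map_one_mul_map_sub_add_star (hU : IsColumnContraction U)
    (h1 : star (U 1 : B) * U 1 = 1) (x : A) :
    (star (U 1 : B) * U x - x) + star (star (U 1 : B) * U x - x) = 0 := by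
  set K : B := algebraMap ℝ B (‖(x : B)‖ ^ 2) with hK
  refine eq_zero_of_forall_smul_le (c := K) fun t => ?_
  set w : A := ((t ^ 2 + ‖(x : B)‖ ^ 2) / 2) • 1 + t • x with hw
  have hw_add_star : (w : B) + star (w : B) = t ^ 2 • 1 + t • ((x : B) + star (x : B)) + K := by
    simp only [hw, hK, AddMemClass.coe_add, SetLike.val_smul_of_tower, OneMemClass.coe_one,
      star_add, star_smul, star_trivial, star_one, smul_add, Algebra.algebraMap_eq_smul_one]
    module
  have hle : star ((t • 1 + x : A) : B) * (t • 1 + x : A) ≤ w + star (w : B) := by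
    rw [hw_add_star]
    push_cast
    rw [star_smul_add_mul_self, star_one, one_mul, one_mul]
    gcongr
    exact CStarAlgebra.star_mul_le_algebraMap_norm_sq
  have hmap : (U (t • 1 + x) : B) = t • U 1 + U x := by
    simp only [map_add, LinearMap.map_smul_of_tower, Subalgebra.coe_add, Subalgebra.coe_smul]
  calc t • ((star (U 1 : B) * U x - x) + star (star (U 1 : B) * U x - x))
      ≤ t • ((star (U 1 : B) * U x - x) + star (star (U 1 : B) * U x - x)) +
          star (U x : B) * U x := le_add_of_nonneg_right (star_mul_self_nonneg _)
    _ = star (U (t • 1 + x) : B) * U (t • 1 + x) - t ^ 2 • 1 - t • ((x : B) + star (x : B)) := by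
        rw [hmap, star_smul_add_mul_self, h1, star_sub]
        module
    _ ≤ w + star (w : B) - t ^ 2 • 1 - t • ((x : B) + star (x : B)) := by
        gcongr
        exact hU.star_mul_self_map_le_add_star hle
    _ = K := by
        rw [hw_add_star]
        module

theorem star_map_one_mul_map (hU : IsColumnContraction U) (h1 : star (U 1 : B) * U 1 = 1)
    (x : A) : star (U 1 : B) * U x = x := by
  set d : B := star (U 1 : B) * U x - x with hd
  have hre : d + star d = 0 := hU.star_map_one_mul_map_sub_add_star h1 x
  have him : Complex.I • (d - star d) = 0 := by
    rw [← hU.star_map_one_mul_map_sub_add_star h1 (Complex.I • x)]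
    simp only [hd, star_sub, star_mul, star_star, map_smul, SetLike.val_smul, Algebra.mul_smul_comm,
      star_smul, RCLike.star_def, Complex.conj_I, neg_smul, sub_neg_eq_add]
    module
  have hsub : d - star d = 0 := (smul_eq_zero_iff_right Complex.I_ne_zero).1 him
  refine sub_eq_zero.1 ?_
  calc d = (2⁻¹ : ℂ) • (d + star d + (d - star d)) := by module
    _ = 0 := by rw [hre, hsub, add_zero, smul_zero]

theorem apply_eq_map_one_mul (hU : IsColumnContraction U) (hinv : ∀ x, U (U x) = x)
    (hsa : IsSelfAdjoint (U 1 : B)) (x : A) : (U x : B) = U 1 * x := by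
  have hsq : (U 1 : B) * U 1 = 1 := hU.map_one_mul_map_one hinv hsa
  rw [← hU.star_map_one_mul_map (by rw [hsa.star_eq, hsq]) x, hsa.star_eq, ← mul_assoc, hsq,
    one_mul]

end IsColumnContraction

/-- The part of the definition of a complete left `M`-projection that sees only columns of length
two. The norm of a column `(x, y)` is encoded by `‖x* x + y* y‖ = ‖(x, y)‖²`. -/
structure IsColumnLeftMProjection {A : Subalgebra ℂ B} (P : A →ₗ[ℂ] A) : Prop where
  map_map (x : A) : P (P x) = P x
  norm_column (x y : A) :
    ‖star (P x : B) * P x + star (x - P x : B) * (x - P x) +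
        (star (P y : B) * P y + star (y - P y : B) * (y - P y))‖ =
      ‖star (x : B) * x + star (y : B) * y‖

/-- The linear map equal to `μ` on the range of an idempotent `P` and to `1` on its kernel. -/
def rangeScaling {R M : Type*} [CommRing R] [AddCommGroup M] [Module R M] (P : M →ₗ[R] M)
    (μ : R) : M →ₗ[R] M :=
  LinearMap.id + (μ - 1) • P

theorem rangeScaling_apply {R M : Type*} [CommRing R] [AddCommGroup M] [Module R M]
    (P : M →ₗ[R] M) (μ : R) (x : M) : rangeScaling P μ x = x + (μ - 1) • P x :=
  rfl

namespace IsColumnLeftMProjection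

variable {A : Subalgebra ℂ B} {P : A →ₗ[ℂ] A}

theorem norm_column_rangeScaling (hP : IsColumnLeftMProjection P) {μ : ℂ} (hμ : ‖μ‖ = 1)
    (x y : A) :
    ‖star (rangeScaling P μ x : B) * rangeScaling P μ x + star (y : B) * y‖ =
      ‖star (x : B) * x + star (y : B) * y‖ := by
  have hrange : P (rangeScaling P μ x) = μ • P x := by
    simp only [rangeScaling_apply, map_add, map_smul, hP.map_map]
    module
  have hker : (rangeScaling P μ x : B) - P (rangeScaling P μ x) = x - P x := by
    rw [hrange]
    simp only [rangeScaling_apply, AddMemClass.coe_add, SetLike.val_smul]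
    module
  have hunit : star (μ • (P x : B)) * (μ • (P x : B)) = star (P x : B) * P x := by
    have : star μ * μ = 1 := by
      simp [← Complex.normSq_eq_conj_mul_self, Complex.normSq_eq_norm_sq, hμ]
    rw [star_smul, smul_mul_smul_comm, this, one_smul]
  rw [← hP.norm_column, ← hP.norm_column x y, hker, hrange, Subalgebra.coe_smul, hunit]

theorem isSelfAdjoint_apply_one (hP : IsColumnLeftMProjection P) : IsSelfAdjoint (P 1 : B) := by
  refine isSelfAdjoint_of_forall_norm_le_one fun μ hμ => ?_
  have h := hP.norm_column_rangeScaling hμ 1 0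
  simp only [ZeroMemClass.coe_zero, mul_zero, add_zero, CStarRing.norm_star_mul_self] at h
  calc ‖1 + (μ - 1) • (P 1 : B)‖ = ‖(rangeScaling P μ 1 : B)‖ := by simp [rangeScaling_apply]
    _ = ‖(1 : B)‖ := (mul_self_inj (norm_nonneg _) (norm_nonneg _)).1 h
    _ ≤ 1 := (IsStarProjection.one B).norm_le

theorem apply_eq_apply_one_mul (hP : IsColumnLeftMProjection P) (x : A) :
    (P x : B) = P 1 * x := by
  set U : A →ₗ[ℂ] A := rangeScaling P (-1)
  have hU (x : A) : U x = x - (2 : ℂ) • P x := by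
    simp only [U, rangeScaling_apply]
    module
  have hcontr : IsColumnContraction U := fun x y =>
    (hP.norm_column_rangeScaling (by simp) x y).le
  have hinv (x : A) : U (U x) = x := by
    simp only [hU, map_sub, map_smul, hP.map_map]
    module
  have hsa : IsSelfAdjoint (U 1 : B) := by
    simpa [hU, two_smul] using
      (IsSelfAdjoint.one B).sub (hP.isSelfAdjoint_apply_one.add hP.isSelfAdjoint_apply_one)
  have hmul := hcontr.apply_eq_map_one_mul hinv hsa x
  simpa [hU, sub_mul] using hmul

theorem isStarProjection_apply_one (hP : IsColumnLeftMProjection P) :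
    IsStarProjection (P 1 : B) where
  isIdempotentElem := by
    rw [IsIdempotentElem, ← hP.apply_eq_apply_one_mul, hP.map_map]
  isSelfAdjoint := hP.isSelfAdjoint_apply_one

end IsColumnLeftMProjection

end SpectralOrder

/-- The embedding of `R` into `Mₙ(R)` as the `k`-th diagonal entry. It is bundled as a
⋆-homomorphism because injective ⋆-homomorphisms of C*-algebras are isometric. -/
def cornerEmbedding (S : Type*) {R n : Type*} [Monoid S] [NonUnitalSemiring R] [StarRing R]
    [DistribMulAction S R] [Fintype n] [DecidableEq n] (k : n) : R →⋆ₙₐ[S] Matrix n n R where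
  toFun := Matrix.single k k
  map_smul' c r := (Matrix.smul_single c k k r).symm
  map_zero' := Matrix.single_zero k k
  map_add' := Matrix.single_add k k
  map_mul' r s := (Matrix.single_mul_single_same r k k k s).symm
  map_star' r := (Matrix.conjTranspose_single k k r).symm

theorem cornerEmbedding_injective {S R n : Type*} [Monoid S] [NonUnitalSemiring R] [StarRing R]
    [DistribMulAction S R] [Fintype n] [DecidableEq n] (k : n) :
    Function.Injective (cornerEmbedding S (R := R) k) := fun r s h => by
  simpa [cornerEmbedding] using congr($h k k)

theorem norm_map_single {B C n : Type*} [NonUnitalCStarAlgebra B] [NonUnitalCStarAlgebra C]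
    [Fintype n] [DecidableEq n] (φ : Matrix n n B ≃⋆ₐ[ℂ] C) (k : n) (b : B) :
    ‖φ (Matrix.single k k b)‖ = ‖b‖ :=
  NonUnitalStarAlgHom.norm_map ((φ : Matrix n n B →⋆ₙₐ[ℂ] C).comp (cornerEmbedding ℂ k))
    (φ.injective.comp (cornerEmbedding_injective (S := ℂ) k)) b

theorem star_mul_self_column {R : Type*} [NonUnitalSemiring R] [StarRing R] (x y : R) :
    star !![x, 0; y, 0] * !![x, 0; y, 0] =
      Matrix.single (0 : Fin 2) (0 : Fin 2) (star x * x + star y * y) := by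
  ext i j
  fin_cases i <;> fin_cases j <;>
    simp [Matrix.star_eq_conjTranspose, Matrix.mul_apply, Fin.sum_univ_two]

theorem star_mul_self_add_of_isStarProjection {R : Type*} [NonUnitalRing R] [StarRing R] {p : R}
    (hp : IsStarProjection p) (y : R) :
    star (p * y) * (p * y) + star (y - p * y) * (y - p * y) = star y * y := by
  have hpp : p * (p * y) = p * y := by rw [← mul_assoc, hp.isIdempotentElem.eq]
  simp only [star_sub, star_mul, hp.isSelfAdjoint.star_eq, mul_sub, sub_mul, mul_assoc, hpp]
  abel

theorem isStarProjection_diagonal_s2 {R n : Type*} [NonUnitalNonAssocSemiring R] [StarRing R]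
    [Fintype n] [DecidableEq n] {p : n → R} (hp : ∀ i, IsStarProjection (p i)) :
    IsStarProjection (Matrix.diagonal p) where
  isIdempotentElem := by
    simp [IsIdempotentElem, Matrix.diagonal_mul_diagonal, (hp _).isIdempotentElem.eq]
  isSelfAdjoint := by
    simp [IsSelfAdjoint, Matrix.star_eq_conjTranspose, Matrix.diagonal_conjTranspose, Pi.star_def,
      (hp _).isSelfAdjoint.star_eq]

theorem isColumnLeftMProjection_of_matrix {B C : Type*} [CStarAlgebra B] [CStarAlgebra C]
    (φ : Matrix (Fin 2) (Fin 2) B ≃⋆ₐ[ℂ] C) {A : Subalgebra ℂ B} {P : A →ₗ[ℂ] A}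
    (hidem : ∀ x, P (P x) = P x)
    (hnorm : ∀ x : Matrix (Fin 2) (Fin 2) A,
      ‖φ (star (x.map fun a => (P a : B)) * (x.map fun a => (P a : B)) +
          star (x.map Subtype.val - x.map fun a => (P a : B)) *
            (x.map Subtype.val - x.map fun a => (P a : B)))‖ =
        ‖φ (x.map Subtype.val)‖ ^ 2) :
    IsColumnLeftMProjection P where
  map_map := hidem
  norm_column x y := by
    have hmap (f : A → B) (hf : f 0 = 0) :
        (!![x, 0; y, 0] : Matrix (Fin 2) (Fin 2) A).map f = !![f x, 0; f y, 0] := by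
      ext i j
      fin_cases i <;> fin_cases j <;> simp [hf]
    have hsub (a b c d : B) : !![a, 0; b, 0] - !![c, 0; d, 0] = !![a - c, 0; b - d, 0] := by
      ext i j
      fin_cases i <;> fin_cases j <;> simp
    have h := hnorm !![x, 0; y, 0]
    rw [pow_two, ← CStarRing.norm_star_mul_self, ← map_star, ← map_mul, hmap _ (by simp),
      hmap _ rfl, hsub, star_mul_self_column, star_mul_self_column, star_mul_self_column,
      ← Matrix.single_add, norm_map_single, norm_map_single] at h
    rw [← h, add_add_add_comm]

theorem norm_map_of_isStarProjection {B C n : Type*} [NonUnitalCStarAlgebra B]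
    [NonUnitalCStarAlgebra C] [Fintype n] (φ : Matrix n n B ≃⋆ₐ[ℂ] C) {e : B}
    (he : IsStarProjection e) (y : Matrix n n B) :
    ‖φ (star (y.map (e * ·)) * y.map (e * ·) +
        star (y - y.map (e * ·)) * (y - y.map (e * ·)))‖ = ‖φ y‖ ^ 2 := by
  classical
  have hmap : y.map (e * ·) = Matrix.diagonal (fun _ => e) * y := by
    ext i j
    simp
  rw [hmap, star_mul_self_add_of_isStarProjection (isStarProjection_diagonal_s2 fun _ => he),
    map_mul, map_star, CStarRing.norm_star_mul_self, pow_two]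

theorem stmt_2_general {B : Type*} [CStarAlgebra B]
    (Mat : ℕ → Type*) [∀ n, CStarAlgebra (Mat n)]
    (ι : ∀ n, Matrix (Fin n) (Fin n) B ≃⋆ₐ[ℂ] Mat n)
    (A : Subalgebra ℂ B) (P : A →ₗ[ℂ] A) :
    ((∀ x : A, P (P x) = P x) ∧
      ∀ n : ℕ, 1 ≤ n → ∀ x : Matrix (Fin n) (Fin n) A,
        ‖ι n (star (x.map fun a => (P a : B)) * (x.map fun a => (P a : B)) +
            star (x.map Subtype.val - x.map fun a => (P a : B)) *
              (x.map Subtype.val - x.map fun a => (P a : B)))‖ =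
          ‖ι n (x.map Subtype.val)‖ ^ 2) ↔
    ∃ e : B, e ∈ A ∧ star e = e ∧ e * e = e ∧ ∀ x : A, (P x : B) = e * (x : B) := by
  constructor
  · rintro ⟨hidem, hnorm⟩
    have hP := isColumnLeftMProjection_of_matrix (ι 2) hidem (hnorm 2 one_le_two)
    have he := hP.isStarProjection_apply_one
    exact ⟨P 1, (P 1).2, he.isSelfAdjoint, he.isIdempotentElem, hP.apply_eq_apply_one_mul⟩
  · rintro ⟨e, -, hsa, hidem, hP⟩
    refine ⟨fun x => Subtype.ext ?_, fun n _ x => ?_⟩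
    · rw [hP, hP, ← mul_assoc, hidem]
    · have hmap : (x.map fun a => (P a : B)) = (x.map Subtype.val).map (e * ·) := by
        simp only [hP, Matrix.map_map, Function.comp_def]
      rw [hmap]
      exact norm_map_of_isStarProjection (ι n) ⟨hidem, hsa⟩ _

/-- Let `B` be a C*-algebra, `A ⊆ B` a norm-closed unital subalgebra and
`P : A → A` a linear map.  The C*-algebra `Mₙ(B)` (with its unique C*-norm) is modelled by an
arbitrary C*-algebra `Mat n` with a ⋆-algebra isomorphism `ι n` from the ⋆-algebra of matrices
`Matrix (Fin n) (Fin n) B`; the norm of a matrix over `B` (in particular of a matrix over `A`) is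
`‖ι n ·‖`.  Then `P` is a complete left `M`-projection (idempotent with
`‖(Pₙx)*(Pₙx) + (x − Pₙx)*(x − Pₙx)‖ = ‖x‖²` for every `n ≥ 1` and every `n × n` matrix `x`
over `A`) iff there is `e ∈ A` with `e = e* = e²` in `B` and `P(x) = e·x` for all `x ∈ A`. -/
theorem stmt_2 {B : Type*} [CStarAlgebra B]
    (Mat : ℕ → Type*) [∀ n, CStarAlgebra (Mat n)]
    (ι : ∀ n, Matrix (Fin n) (Fin n) B ≃⋆ₐ[ℂ] Mat n)
    (A : Subalgebra ℂ B) (hA : IsClosed (A : Set B))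
    (P : A →ₗ[ℂ] A) :
    ((∀ x : A, P (P x) = P x) ∧
      ∀ n : ℕ, 1 ≤ n → ∀ x : Matrix (Fin n) (Fin n) A,
        ‖ι n (star (x.map fun a => ((P a : B))) * (x.map fun a => ((P a : B))) +
            star (x.map (Subtype.val) - x.map fun a => ((P a : B))) *
              (x.map (Subtype.val) - x.map fun a => ((P a : B))))‖
          = ‖ι n (x.map (Subtype.val))‖ ^ 2) ↔
    ∃ e : B, e ∈ A ∧ star e = e ∧ e * e = e ∧ ∀ x : A, (P x : B) = e * (x : B) := by
  exact stmt_2_general Mat ι A P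
end
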